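/- Define the pivoting functional Z(ζ) = ∫_{X₂} W_{c₁}(μ_{|x₂}, ζ_{|x₂}) dμ₂ + ∫_{Y₁} W_{c₂}(ζ_{|y₁}, ν_{|y₁}) dν₁ on intermedium measures ζ ∈ I(μ,ν). Then W_c(μ,ν) = inf_{ζ ∈ I(μ,ν)} Z(ζ). -/

import Mathlib

open MeasureTheory ProbabilityTheory
open scoped ENNReal ProbabilityTheory

noncomputable section

variable {X₁ X₂ Y₁ Y₂ : Type*} [MeasurableSpace X₁] [MeasurableSpace X₂]
  [MeasurableSpace Y₁] [MeasurableSpace Y₂]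

/-- `π` is a transportation plan (coupling) between `μ` and `ν`. -/
def IsCoupling {A B : Type*} [MeasurableSpace A] [MeasurableSpace B]
    (π : Measure (A × B)) (μ : Measure A) (ν : Measure B) : Prop :=
  π.map Prod.fst = μ ∧ π.map Prod.snd = ν

/-- The minimal transportation (Wasserstein) cost for the cost `c`. -/
noncomputable def Wc {A B : Type*} [MeasurableSpace A] [MeasurableSpace B]
    (c : A → B → ℝ≥0∞) (μ : Measure A) (ν : Measure B) : ℝ≥0∞ :=
  ⨅ π ∈ {π : Measure (A × B) | IsCoupling π μ ν}, ∫⁻ p, c p.1 p.2 ∂π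

/-- `(f1, f2)` is a cardinal flow between `μ ∈ P(X₁ × X₂)` and `ν ∈ P(Y₁ × Y₂)`:
the marginal of `f1` on `X = X₁ × X₂` is `μ`, the marginal of `f2` on `Y = Y₁ × Y₂` is `ν`,
and `f1`, `f2` have the same marginal on `Y₁ × X₂`. -/
def IsCardinalFlow (μ : Measure (X₁ × X₂)) (ν : Measure (Y₁ × Y₂))
    (f1 : Measure ((X₁ × X₂) × Y₁)) (f2 : Measure (X₂ × (Y₁ × Y₂))) : Prop :=
  f1.map Prod.fst = μ ∧ f2.map Prod.snd = ν ∧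
    f1.map (fun p => (p.2, p.1.2)) = f2.map (fun p => (p.2.1, p.1))

/-- The set of cardinal flows between `μ` and `ν`. -/
def Flows (μ : Measure (X₁ × X₂)) (ν : Measure (Y₁ × Y₂)) :
    Set (Measure ((X₁ × X₂) × Y₁) × Measure (X₂ × (Y₁ × Y₂))) :=
  {F | IsProbabilityMeasure F.1 ∧ IsProbabilityMeasure F.2 ∧ IsCardinalFlow μ ν F.1 F.2}

/-- The cardinal flow functional `CT(f¹,f²) = ∫ c₁ df¹ + ∫ c₂ df²`. -/
noncomputable def CT (c₁ : X₁ → Y₁ → ℝ≥0∞) (c₂ : X₂ → Y₂ → ℝ≥0∞)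
    (F : Measure ((X₁ × X₂) × Y₁) × Measure (X₂ × (Y₁ × Y₂))) : ℝ≥0∞ :=
  ∫⁻ q, c₁ q.1.1 q.2 ∂F.1 + ∫⁻ q, c₂ q.1 q.2.2 ∂F.2

/-- `ζ` is a pivot measure between `μ` and `ν` for the separable cost `c₁ + c₂`:
some optimal cardinal flow glues on `ζ`. -/
def IsPivot (μ : Measure (X₁ × X₂)) (ν : Measure (Y₁ × Y₂))
    (c₁ : X₁ → Y₁ → ℝ≥0∞) (c₂ : X₂ → Y₂ → ℝ≥0∞) (ζ : Measure (Y₁ × X₂)) : Prop :=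
  ∃ F ∈ Flows μ ν, F.1.map (fun p => (p.2, p.1.2)) = ζ ∧
    CT c₁ c₂ F = ⨅ G ∈ Flows μ ν, CT c₁ c₂ G

/-- The pivoting functional `Z` on intermedium measures, via conditional laws. -/
noncomputable def Zfun (μ ν ζ : Measure (ℝ × ℝ))
    [IsFiniteMeasure μ] [IsFiniteMeasure ν] [IsFiniteMeasure ζ]
    (c₁ c₂ : ℝ → ℝ → ℝ≥0∞) : ℝ≥0∞ :=
  haveI : IsFiniteMeasure (μ.map Prod.swap) := Measure.isFiniteMeasure_map μ _
  haveI : IsFiniteMeasure (ζ.map Prod.swap) := Measure.isFiniteMeasure_map ζ _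
  ∫⁻ x₂, Wc c₁ ((μ.map Prod.swap).condKernel x₂) ((ζ.map Prod.swap).condKernel x₂)
      ∂(μ.map Prod.snd)
    + ∫⁻ y₁, Wc c₂ (ζ.condKernel y₁) (ν.condKernel y₁) ∂(ν.map Prod.fst)

/-!
Gluing the two parts of a flow along their common image on `Y₁ × X₂` shows that every flow comes
from a transport plan of the same cost, so `Wc μ ν` is the infimum of `CT` over flows. A flow
through an intermedium measure `ζ` amounts to a coupling of `μ` and `ζ` over `X₂` and a coupling
of `ζ` and `ν` over `Y₁`, chosen independently. By disintegration, the cost of a coupling over a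
factor is at least the integral of the transport costs between conditional laws. Equality is
reached by optimal plans between conditional laws that depend measurably on the parameter: by
Prokhorov's theorem the map taking a plan to its marginals is proper, so the optimal plans form a
measurable compact-valued multifunction, and such a multifunction has a measurable selection.
-/

open Set TopologicalSpace Filter Topology Function

section MeasurableSelection

variable {X E α : Type*} [LinearOrder α] {J : E → α}

/-- The set of minimisers of `J` on `K`. -/
def minimizers (J : E → α) (K : Set E) : Set E :=
  {e ∈ K | IsMinOn J K e}

/-- The set of points of `K` that minimise lexicographically the first `n` of the functions
`J 0, J 1, …`; as `n` grows it narrows `K` down towards a single point. -/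
def lexMinimizers (J : ℕ → E → α) (K : Set E) : ℕ → Set E
  | 0 => K
  | n + 1 => minimizers (J n) (lexMinimizers J K n)

lemma minimizers_subset (J : E → α) (K : Set E) : minimizers J K ⊆ K :=
  sep_subset _ _

lemma eq_of_mem_minimizers {K : Set E} {e e' : E} (he : e ∈ minimizers J K)
    (he' : e' ∈ minimizers J K) : J e = J e' :=
  le_antisymm (he.2 he'.1) (he'.2 he.1)

variable [TopologicalSpace E]

lemma nonempty_minimizers (hJ : LowerSemicontinuous J) {K : Set E} (hK : IsCompact K)
    (hne : K.Nonempty) : (minimizers J K).Nonempty :=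
  (hJ.lowerSemicontinuousOn K).exists_isMinOn hne hK

lemma isCompact_minimizers (hJ : LowerSemicontinuous J) {K : Set E} (hK : IsCompact K) :
    IsCompact (minimizers J K) := by
  have h : minimizers J K = K ∩ ⋂ e ∈ K, J ⁻¹' Iic (J e) := by
    ext e
    simp [minimizers, IsMinOn, IsMinFilter]
  rw [h]
  exact hK.inter_right (isClosed_biInter fun e _ ↦ hJ.isClosed_preimage (J e))

/- A minimiser of `J` on `K ∩ C` fails to minimise `J` on `K` exactly when some level `u i`
separates the two minima. -/
lemma minimizers_inter_nonempty_iff [DenselyOrdered α] [TopologicalSpace α] [OrderTopology α]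
    (hJ : LowerSemicontinuous J) {K C : Set E} (hK : IsCompact K)
    (hC : IsClosed C) {ι : Type*} {u : ι → α} (hu : DenseRange u) :
    (minimizers J K ∩ C).Nonempty ↔ (K ∩ C).Nonempty ∧
      ∀ i, (K ∩ J ⁻¹' Iic (u i)).Nonempty → (K ∩ (C ∩ J ⁻¹' Iic (u i))).Nonempty := by
  constructor
  · rintro ⟨e, ⟨heK, hmin⟩, heC⟩
    exact ⟨⟨e, heK, heC⟩, fun i ⟨e', he'K, he'i⟩ ↦
      ⟨e, heK, heC, show J e ≤ u i from (hmin he'K).trans he'i⟩⟩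
  · rintro ⟨hne, hlevel⟩
    obtain ⟨e, ⟨heK, heC⟩, hmin⟩ := nonempty_minimizers hJ (hK.inter_right hC) hne
    refine ⟨e, ⟨heK, fun e' he'K ↦ ?_⟩, heC⟩
    by_contra! hlt
    obtain ⟨_, ⟨i, rfl⟩, hi', hi⟩ := hu.exists_between (show J e' < J e by simpa using hlt)
    obtain ⟨e'', he''K, he''C, he''i⟩ := hlevel i ⟨e', he'K, hi'.le⟩
    exact hi.not_ge ((hmin ⟨he''K, he''C⟩).trans he''i)

variable [MeasurableSpace X] {F : X → Set E}

/-- A measurable multifunction with nonempty compact values; measurability is expressed through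
the sets of parameters whose value meets a given closed set. -/
structure IsMeasurableCompactValued (F : X → Set E) : Prop where
  isCompact : ∀ x, IsCompact (F x)
  nonempty : ∀ x, (F x).Nonempty
  measurableSet_inter_nonempty : ∀ C, IsClosed C → MeasurableSet {x | (F x ∩ C).Nonempty}

namespace IsMeasurableCompactValued

lemma minimizers_comp [DenselyOrdered α] [TopologicalSpace α] [OrderTopology α]
    [SeparableSpace α] [Nonempty α] (hF : IsMeasurableCompactValued F)
    (hJ : LowerSemicontinuous J) :
    IsMeasurableCompactValued fun x ↦ minimizers J (F x) where
  isCompact x := isCompact_minimizers hJ (hF.isCompact x)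
  nonempty x := nonempty_minimizers hJ (hF.isCompact x) (hF.nonempty x)
  measurableSet_inter_nonempty C hC := by
    have hlevel t : IsClosed (J ⁻¹' Iic t) := hJ.isClosed_preimage t
    convert (hF.measurableSet_inter_nonempty C hC).inter <| .iInter fun n ↦
      (hF.measurableSet_inter_nonempty _ (hlevel (denseSeq α n))).imp
        (hF.measurableSet_inter_nonempty _ (hC.inter (hlevel (denseSeq α n)))) using 1
    ext x
    simp only [mem_ofPred_eq, mem_inter_iff, mem_iInter]
    exact minimizers_inter_nonempty_iff hJ (hF.isCompact x) hC (denseRange_denseSeq α)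

lemma lexMinimizers_comp [DenselyOrdered α] [TopologicalSpace α] [OrderTopology α]
    [SeparableSpace α] [Nonempty α] (hF : IsMeasurableCompactValued F) {J : ℕ → E → α}
    (hJ : ∀ n, LowerSemicontinuous (J n)) (n : ℕ) :
    IsMeasurableCompactValued fun x ↦ lexMinimizers J (F x) n := by
  induction n with
  | zero => exact hF
  | succ n ih => exact ih.minimizers_comp (hJ n)

lemma iInter [T2Space E] {F : ℕ → X → Set E} (hF : ∀ n, IsMeasurableCompactValued (F n))
    (hanti : ∀ n x, F (n + 1) x ⊆ F n x) : IsMeasurableCompactValued fun x ↦ ⋂ n, F n x := by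
  have hinter {C : Set E} (hC : IsClosed C) (x : X) :
      ((⋂ n, F n x) ∩ C).Nonempty ↔ ∀ n, (F n x ∩ C).Nonempty := by
    rw [iInter_inter]
    refine ⟨fun h n ↦ h.mono (iInter_subset _ n), fun h ↦ ?_⟩
    exact IsCompact.nonempty_iInter_of_sequence_nonempty_isCompact_isClosed _
      (fun n ↦ inter_subset_inter_left _ (hanti n x)) h
      (((hF 0).isCompact x).inter_right hC)
      (fun n ↦ (((hF n).isCompact x).isClosed.inter hC))
  refine ⟨fun x ↦ ?_, fun x ↦ ?_, fun C hC ↦ ?_⟩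
  · exact ((hF 0).isCompact x).of_isClosed_subset
      (isClosed_iInter fun n ↦ ((hF n).isCompact x).isClosed) (iInter_subset _ 0)
  · simpa using (hinter isClosed_univ x).2 fun n ↦ by simpa using (hF n).nonempty x
  · simp_rw [hinter hC, ofPred_forall]
    exact .iInter fun n ↦ (hF n).measurableSet_inter_nonempty C hC

theorem exists_measurable_selection [T2Space E] [SecondCountableTopology E] [MeasurableSpace E]
    [BorelSpace E] (hF : IsMeasurableCompactValued F) :
    ∃ s : X → E, Measurable s ∧ ∀ x, s x ∈ F x := by
  -- The indicators of a basis separate points, so minimising them all in turn leaves one point.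
  obtain ⟨U, hU⟩ := exists_seq_basis E
  have hUo n : IsOpen (U n) := hU.isOpen (mem_range_self n)
  let J (n : ℕ) : E → ℝ≥0∞ := (U n).indicator 1
  have hG : IsMeasurableCompactValued fun x ↦ ⋂ n, lexMinimizers J (F x) n :=
    iInter (hF.lexMinimizers_comp fun n ↦ (hUo n).lowerSemicontinuous_indicator zero_le_one)
      fun n x ↦ minimizers_subset _ _
  have hsubsingleton x : (⋂ n, lexMinimizers J (F x) n).Subsingleton := by
    intro e he e' he'
    refine (hU.inseparable_iff.2 <| forall_mem_range.2 fun n ↦ ?_).eq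
    have : J n e = J n e' :=
      eq_of_mem_minimizers (mem_iInter.1 he (n + 1)) (mem_iInter.1 he' (n + 1))
    by_cases he : e ∈ U n <;> by_cases he' : e' ∈ U n <;> simp_all [J]
  choose s hs using hG.nonempty
  refine ⟨s, measurable_of_isClosed fun C hC ↦ ?_, fun x ↦ mem_iInter.1 (hs x) 0⟩
  convert hG.measurableSet_inter_nonempty C hC using 1
  ext x
  exact ⟨fun h ↦ ⟨s x, hs x, h⟩,
    fun ⟨_, he, heC⟩ ↦ by rwa [mem_preimage, hsubsingleton x (hs x) he]⟩

end IsMeasurableCompactValued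

end MeasurableSelection

section WeakTopology

lemma lintegral_eq_lintegral_measure_ofReal_lt {A : Type*} [MeasurableSpace A] (μ : Measure A)
    [SFinite μ] {f : A → ℝ≥0∞} (hf : Measurable f) :
    ∫⁻ a, f a ∂μ = ∫⁻ t in Ioi (0 : ℝ), μ {a | ENNReal.ofReal t < f a} := by
  have hvol (x : ℝ≥0∞) : x = ∫⁻ t in Ioi (0 : ℝ), {t | ENNReal.ofReal t < x}.indicator 1 t := by
    rw [lintegral_indicator_one (measurableSet_lt (by fun_prop) (by fun_prop)),
      Measure.restrict_apply (measurableSet_lt (by fun_prop) (by fun_prop))]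
    induction x with
    | top => simp
    | coe x =>
      have : {t | ENNReal.ofReal t < x} ∩ Ioi (0 : ℝ) = Ioo 0 (x : ℝ) := by
        ext t
        refine and_comm.trans (and_congr_right fun ht ↦ ?_)
        exact ENNReal.ofReal_lt_coe_iff (le_of_lt ht)
      simp [this]
  calc ∫⁻ a, f a ∂μ
      = ∫⁻ a, (∫⁻ t in Ioi (0 : ℝ), {t | ENNReal.ofReal t < f a}.indicator 1 t) ∂μ :=
        lintegral_congr fun a ↦ hvol (f a)
    _ = ∫⁻ t in Ioi (0 : ℝ), ∫⁻ a, {t | ENNReal.ofReal t < f a}.indicator 1 t ∂μ := by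
        refine lintegral_lintegral_swap (Measurable.aemeasurable ?_)
        exact measurable_const.indicator
          (measurableSet_lt (measurable_snd.ennreal_ofReal) (hf.comp measurable_fst))
    _ = ∫⁻ t in Ioi (0 : ℝ), μ {a | ENNReal.ofReal t < f a} := by
        refine lintegral_congr fun t ↦ ?_
        rw [← lintegral_indicator_one (measurableSet_lt measurable_const hf)]
        rfl

lemma lowerSemicontinuous_measure_of_isOpen {A : Type*} [TopologicalSpace A] [MeasurableSpace A]
    [OpensMeasurableSpace A] [HasOuterApproxClosed A] {U : Set A} (hU : IsOpen U) :
    LowerSemicontinuous fun μ : ProbabilityMeasure A ↦ (μ : Measure A) U :=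
  lowerSemicontinuous_iff_le_liminf.2 fun _ ↦
    ProbabilityMeasure.le_liminf_measure_open_of_tendsto tendsto_id hU

variable {A : Type*} [TopologicalSpace A] [SecondCountableTopology A] [MeasurableSpace A]

/-- A countable subbasis of the weak topology, made of the conditions `μ U > q` where `U` is a
finite union of sets of a countable basis and `q` runs through a countable dense set. -/
def weakSubbasis (A : Type*) [TopologicalSpace A] [SecondCountableTopology A] [MeasurableSpace A] :
    Set (Set (ProbabilityMeasure A)) :=
  image2 (fun t n ↦ {μ | denseSeq ℝ≥0∞ n < (μ : Measure A) (⋃₀ t)})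
    {t | t.Finite ∧ t ⊆ countableBasis A} univ

lemma countable_weakSubbasis : (weakSubbasis A).Countable :=
  (countable_ofPred_finite_subset (countable_countableBasis A)).image2 countable_univ _

lemma exists_mem_weakSubbasis {U : Set A} (hU : IsOpen U) {μ : ProbabilityMeasure A} {r : ℝ≥0∞}
    (hr : r < (μ : Measure A) U) :
    ∃ s ∈ weakSubbasis A, μ ∈ s ∧ ∀ ν ∈ s, r < (ν : Measure A) U := by
  obtain ⟨S, hS, rfl⟩ := (isBasis_countableBasis A).open_eq_sUnion hU
  obtain ⟨t, htS, ht, hrt⟩ : ∃ t ⊆ S, t.Finite ∧ r < (μ : Measure A) (⋃₀ t) := by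
    have hcount : {t : Set (Set A) | t.Finite ∧ t ⊆ S}.Countable :=
      countable_ofPred_finite_subset ((countable_countableBasis A).mono hS)
    have hdir : DirectedOn ((· ⊆ ·) on sUnion) {t : Set (Set A) | t.Finite ∧ t ⊆ S} :=
      fun t ht t' ht' ↦ ⟨t ∪ t', ⟨ht.1.union ht'.1, union_subset ht.2 ht'.2⟩,
        sUnion_subset_sUnion subset_union_left, sUnion_subset_sUnion subset_union_right⟩
    have hunion : ⋃₀ S = ⋃ t ∈ {t : Set (Set A) | t.Finite ∧ t ⊆ S}, ⋃₀ t := by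
      refine subset_antisymm (fun a ⟨u, hu, hau⟩ ↦ ?_)
        (iUnion₂_subset fun t ht ↦ sUnion_subset_sUnion ht.2)
      exact mem_biUnion ⟨finite_singleton u, singleton_subset_iff.2 hu⟩ ⟨u, rfl, hau⟩
    rw [hunion, measure_biUnion_eq_iSup hcount hdir] at hr
    obtain ⟨t, ⟨ht, htS⟩, hrt⟩ := lt_biSup_iff.1 hr
    exact ⟨t, htS, ht, hrt⟩
  obtain ⟨_, ⟨n, rfl⟩, hrn, hnt⟩ := (denseRange_denseSeq ℝ≥0∞).exists_between hrt
  exact ⟨_, mem_image2_of_mem ⟨ht, htS.trans hS⟩ (mem_univ n), hnt, fun ν hν ↦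
    (hrn.trans hν).trans_le (measure_mono (sUnion_subset_sUnion htS))⟩

variable [OpensMeasurableSpace A] [HasOuterApproxClosed A]

lemma isOpen_of_mem_weakSubbasis {s : Set (ProbabilityMeasure A)} (hs : s ∈ weakSubbasis A) :
    IsOpen s := by
  obtain ⟨t, ⟨-, ht⟩, n, -, rfl⟩ := hs
  exact (lowerSemicontinuous_measure_of_isOpen
    (isOpen_sUnion fun u hu ↦ isOpen_of_mem_countableBasis (ht hu))).isOpen_preimage _

lemma eq_generateFrom_weakSubbasis :
    (inferInstance : TopologicalSpace (ProbabilityMeasure A)) = .generateFrom (weakSubbasis A) := by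
  refine le_antisymm (le_generateFrom fun s hs ↦ isOpen_of_mem_weakSubbasis hs) ?_
  refine le_of_nhds_le_nhds fun μ ↦ ?_
  have : (@nhds _ (.generateFrom (weakSubbasis A)) μ).IsCountablyGenerated :=
    letI : TopologicalSpace (ProbabilityMeasure A) := .generateFrom (weakSubbasis A)
    haveI : SecondCountableTopology (ProbabilityMeasure A) := ⟨_, countable_weakSubbasis, rfl⟩
    inferInstance
  refine tendsto_of_forall_isOpen_le_liminf' fun U hU ↦ ?_
  refine le_of_forall_lt fun r hr ↦ ?_
  obtain ⟨r', hrr', hr'⟩ := exists_between hr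
  obtain ⟨s, hs, hμs, hsU⟩ := exists_mem_weakSubbasis hU hr'
  have hs_nhds : s ∈ @nhds _ (.generateFrom (weakSubbasis A)) μ := by
    rw [nhds_generateFrom]
    exact mem_iInf_of_mem s (mem_iInf_of_mem ⟨hμs, hs⟩ (mem_principal_self s))
  exact hrr'.trans_le (le_liminf_of_le (by isBoundedDefault)
    (mem_of_superset hs_nhds fun ν hν ↦ (hsU ν hν).le))

instance secondCountableTopology_probabilityMeasure :
    SecondCountableTopology (ProbabilityMeasure A) :=
  ⟨weakSubbasis A, countable_weakSubbasis, eq_generateFrom_weakSubbasis⟩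

theorem lowerSemicontinuous_lintegral {f : A → ℝ≥0∞} (hf : LowerSemicontinuous f) :
    LowerSemicontinuous fun μ : ProbabilityMeasure A ↦ ∫⁻ a, f a ∂μ := by
  simp_rw [lintegral_eq_lintegral_measure_ofReal_lt _ hf.measurable]
  refine lowerSemicontinuous_iff_le_liminf.2 fun μ ↦ ?_
  calc ∫⁻ t in Ioi (0 : ℝ), (μ : Measure A) {a | ENNReal.ofReal t < f a}
      ≤ ∫⁻ t in Ioi (0 : ℝ), liminf (fun ν : ProbabilityMeasure A ↦
          (ν : Measure A) {a | ENNReal.ofReal t < f a}) (𝓝 μ) :=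
        lintegral_mono fun t ↦
          (lowerSemicontinuous_measure_of_isOpen (hf.isOpen_preimage _)).le_liminf μ
    _ ≤ _ := lintegral_liminf_le fun ν ↦ Antitone.measurable fun s t hst ↦
        measure_mono fun a ha ↦ (ENNReal.ofReal_le_ofReal hst).trans_lt ha

instance borelSpace_probabilityMeasure {A : Type*} [TopologicalSpace A] [SecondCountableTopology A]
    [MeasurableSpace A] [BorelSpace A] [HasOuterApproxClosed A] :
    BorelSpace (ProbabilityMeasure A) := by
  refine ⟨le_antisymm ?_ ?_⟩
  · refine Measurable.comap_le (f := ((↑) : ProbabilityMeasure A → Measure A)) ?_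
    let _ : MeasurableSpace (ProbabilityMeasure A) := borel _
    have : BorelSpace (ProbabilityMeasure A) := ⟨rfl⟩
    have (μ : ProbabilityMeasure A) : IsProbabilityMeasure (μ : Measure A) := μ.2
    exact Measurable.measure_of_isPiSystem_of_isProbabilityMeasure BorelSpace.measurable_eq
      isPiSystem_isOpen fun U hU ↦ (lowerSemicontinuous_measure_of_isOpen hU).measurable
  · rw [borel_eq_generateFrom_of_subbasis eq_generateFrom_weakSubbasis]
    refine MeasurableSpace.generateFrom_le ?_
    rintro _ ⟨t, ⟨-, htA⟩, n, -, rfl⟩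
    have ht : MeasurableSet (⋃₀ t) :=
      (isOpen_sUnion fun u hu ↦ isOpen_of_mem_countableBasis (htA hu)).measurableSet
    exact measurableSet_lt measurable_const
      ((Measure.measurable_coe ht).comp measurable_subtype_coe)

end WeakTopology

section OptimalPlans

lemma isMeasurableCompactValued_preimage_of_isProperMap {X E G : Type*} [MeasurableSpace X]
    [TopologicalSpace E] [TopologicalSpace G] [MeasurableSpace G]
    [OpensMeasurableSpace G] {Φ : E → G} (hΦ : IsProperMap Φ) (hsurj : Surjective Φ) {φ : X → G}
    (hφ : Measurable φ) : IsMeasurableCompactValued fun x ↦ Φ ⁻¹' {φ x} where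
  isCompact x := hΦ.isCompact_preimage isCompact_singleton
  nonempty x := hsurj (φ x)
  measurableSet_inter_nonempty C hC := by
    convert hφ (hΦ.isClosedMap C hC).measurableSet using 1
    ext x
    simp [Set.Nonempty, and_comm]

variable {A B : Type*} [MeasurableSpace A] [MeasurableSpace B]

lemma IsCoupling.isProbabilityMeasure {π : Measure (A × B)} {μ : Measure A} {ν : Measure B}
    [IsProbabilityMeasure μ] (h : IsCoupling π μ ν) : IsProbabilityMeasure π := by
  have : IsProbabilityMeasure (π.map Prod.fst) := by rw [h.1]; infer_instance
  exact Measure.isProbabilityMeasure_of_map Prod.fst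

/-- The pair of marginals of a probability measure on a product. -/
def marginals (π : ProbabilityMeasure (A × B)) : ProbabilityMeasure A × ProbabilityMeasure B :=
  (π.map measurable_fst.aemeasurable, π.map measurable_snd.aemeasurable)

lemma marginals_eq_iff {π : ProbabilityMeasure (A × B)} {μ : ProbabilityMeasure A}
    {ν : ProbabilityMeasure B} : marginals π = (μ, ν) ↔ IsCoupling (π : Measure (A × B)) μ ν :=
  Prod.ext_iff.trans (and_congr Subtype.ext_iff Subtype.ext_iff)

lemma surjective_marginals : Surjective (marginals : ProbabilityMeasure (A × B) → _) := by
  rintro ⟨μ, ν⟩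
  exact ⟨μ.prod ν, marginals_eq_iff.2 ⟨by simp, by simp⟩⟩

variable [TopologicalSpace A] [PolishSpace A] [BorelSpace A]
  [TopologicalSpace B] [PolishSpace B] [BorelSpace B]

lemma isTightMeasureSet_of_isCompact {S : Set (ProbabilityMeasure A)} (hS : IsCompact S) :
    IsTightMeasureSet {(μ : Measure A) | μ ∈ S} := by
  let _ := upgradeIsCompletelyMetrizable A
  exact isTightMeasureSet_of_isCompact_closure hS.closure

theorem isProperMap_marginals : IsProperMap (marginals : ProbabilityMeasure (A × B) → _) := by
  have hcont : Continuous (marginals : ProbabilityMeasure (A × B) → _) :=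
    (ProbabilityMeasure.continuous_map continuous_fst).prodMk
      (ProbabilityMeasure.continuous_map continuous_snd)
  refine isProperMap_iff_isCompact_preimage.2 ⟨hcont, fun K hK ↦ ?_⟩
  rw [← (hK.isClosed.preimage hcont).closure_eq]
  refine isCompact_closure_of_isTightMeasureSet (.prodMk ?_ ?_)
  · refine (isTightMeasureSet_of_isCompact (hK.image continuous_fst)).subset ?_
    rintro _ ⟨_, ⟨π, hπ, rfl⟩, rfl⟩
    exact ⟨_, mem_image_of_mem _ hπ, rfl⟩
  · refine (isTightMeasureSet_of_isCompact (hK.image continuous_snd)).subset ?_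
    rintro _ ⟨_, ⟨π, hπ, rfl⟩, rfl⟩
    exact ⟨_, mem_image_of_mem _ hπ, rfl⟩

theorem exists_measurable_isCoupling_lintegral_eq_Wc {X : Type*} [MeasurableSpace X]
    (κ : Kernel X A) (η : Kernel X B) [IsMarkovKernel κ] [IsMarkovKernel η] {c : A → B → ℝ≥0∞}
    (hc : LowerSemicontinuous (uncurry c)) :
    ∃ K : Kernel X (A × B), IsMarkovKernel K ∧ ∀ x, IsCoupling (K x) (κ x) (η x) ∧
      ∫⁻ p, c p.1 p.2 ∂(K x) = Wc c (κ x) (η x) := by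
  let P (x : X) : ProbabilityMeasure A × ProbabilityMeasure B :=
    (⟨κ x, inferInstance⟩, ⟨η x, inferInstance⟩)
  have hP : Measurable P := κ.measurable.subtype_mk.prodMk η.measurable.subtype_mk
  have hcost := lowerSemicontinuous_lintegral hc
  have hplans : IsMeasurableCompactValued fun x ↦ marginals ⁻¹' {P x} :=
    isMeasurableCompactValued_preimage_of_isProperMap isProperMap_marginals surjective_marginals hP
  obtain ⟨s, hs, hsP⟩ := (hplans.minimizers_comp hcost).exists_measurable_selection
  refine ⟨⟨fun x ↦ s x, measurable_subtype_coe.comp hs⟩, ⟨fun x ↦ (s x).2⟩, fun x ↦ ?_⟩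
  have hcoupling : IsCoupling (s x : Measure (A × B)) (κ x) (η x) := marginals_eq_iff.1 (hsP x).1
  refine ⟨hcoupling, le_antisymm (le_iInf₂ fun π hπ ↦ ?_)
    (iInf₂_le (s x : Measure (A × B)) hcoupling)⟩
  exact isMinOn_iff.1 (hsP x).2 ⟨π, hπ.isProbabilityMeasure⟩ (marginals_eq_iff.2 hπ)

end OptimalPlans

section ConditionalTransport

variable {T A B : Type*} [MeasurableSpace T] [MeasurableSpace A] [MeasurableSpace B]

/-- A fibred coupling: `f` couples `ρ` and `σ` with transport only inside the fibres over `T`,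
whose coordinate is shared rather than duplicated. -/
def IsCouplingOver (f : Measure (T × (A × B))) (ρ : Measure (T × A)) (σ : Measure (T × B)) :
    Prop :=
  f.map (Prod.map id Prod.fst) = ρ ∧ f.map (Prod.map id Prod.snd) = σ

variable {ρ : Measure (T × A)} {σ : Measure (T × B)} {f : Measure (T × (A × B))}

lemma IsCouplingOver.fst_left (h : IsCouplingOver f ρ σ) : ρ.fst = f.fst := by
  rw [← h.1, Measure.fst, Measure.map_map measurable_fst (by fun_prop)]
  rfl

lemma IsCouplingOver.fst_right (h : IsCouplingOver f ρ σ) : σ.fst = f.fst := by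
  rw [← h.2, Measure.fst, Measure.map_map measurable_fst (by fun_prop)]
  rfl

variable [StandardBorelSpace A] [Nonempty A] [StandardBorelSpace B] [Nonempty B]
  [IsFiniteMeasure ρ] [IsFiniteMeasure σ]

lemma isCouplingOver_compProd (hρσ : ρ.fst = σ.fst) {K : Kernel T (A × B)} [IsMarkovKernel K]
    (hK : ∀ t, IsCoupling (K t) (ρ.condKernel t) (σ.condKernel t)) :
    IsCouplingOver (ρ.fst ⊗ₘ K) ρ σ := by
  have hfst : K.map Prod.fst = ρ.condKernel := by
    ext t : 1
    rw [Kernel.map_apply _ measurable_fst, (hK t).1]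
  have hsnd : K.map Prod.snd = σ.condKernel := by
    ext t : 1
    rw [Kernel.map_apply _ measurable_snd, (hK t).2]
  constructor
  · rw [← Measure.compProd_map measurable_fst, hfst, Measure.disintegrate]
  · rw [← Measure.compProd_map measurable_snd, hsnd, hρσ, Measure.disintegrate]

lemma exists_isCouplingOver (hρσ : ρ.fst = σ.fst) :
    ∃ f : Measure (T × (A × B)), IsCouplingOver f ρ σ :=
  ⟨_, isCouplingOver_compProd hρσ (K := ρ.condKernel ×ₖ σ.condKernel) fun t ↦ by
    simp [IsCoupling, Kernel.prod_apply]⟩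

lemma IsCouplingOver.ae_isCoupling_condKernel [IsFiniteMeasure f] (h : IsCouplingOver f ρ σ) :
    ∀ᵐ t ∂f.fst, IsCoupling (f.condKernel t) (ρ.condKernel t) (σ.condKernel t) := by
  have hfst : ∀ᵐ t ∂ρ.fst, f.condKernel.map Prod.fst t = ρ.condKernel t := by
    apply eq_condKernel_of_measure_eq_compProd
    rw [Measure.compProd_map measurable_fst, h.fst_left, Measure.disintegrate, h.1]
  have hsnd : ∀ᵐ t ∂σ.fst, f.condKernel.map Prod.snd t = σ.condKernel t := by
    apply eq_condKernel_of_measure_eq_compProd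
    rw [Measure.compProd_map measurable_snd, h.fst_right, Measure.disintegrate, h.2]
  filter_upwards [h.fst_left ▸ hfst, h.fst_right ▸ hsnd] with t hfst hsnd
  rw [Kernel.map_apply _ measurable_fst] at hfst
  rw [Kernel.map_apply _ measurable_snd] at hsnd
  exact ⟨hfst, hsnd⟩

theorem IsCouplingOver.lintegral_Wc_condKernel_le [IsFiniteMeasure f] (h : IsCouplingOver f ρ σ)
    {c : A → B → ℝ≥0∞} (hc : Measurable (uncurry c)) :
    ∫⁻ t, Wc c (ρ.condKernel t) (σ.condKernel t) ∂ρ.fst ≤ ∫⁻ w, c w.2.1 w.2.2 ∂f :=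
  calc ∫⁻ t, Wc c (ρ.condKernel t) (σ.condKernel t) ∂ρ.fst
      ≤ ∫⁻ t, ∫⁻ p, c p.1 p.2 ∂(f.condKernel t) ∂f.fst := by
        rw [h.fst_left]
        exact lintegral_mono_ae (h.ae_isCoupling_condKernel.mono fun t ht ↦
          iInf₂_le (f.condKernel t) ht)
    _ = ∫⁻ w, c w.2.1 w.2.2 ∂f := by
        conv_rhs => rw [← f.disintegrate f.condKernel]
        exact (Measure.lintegral_compProd (hc.comp measurable_snd)).symm

end ConditionalTransport

section OptimalConditionalPlans

theorem exists_isCouplingOver_lintegral_eq {T A B : Type*} [MeasurableSpace T]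
    [MeasurableSpace A] [TopologicalSpace A] [PolishSpace A] [BorelSpace A] [Nonempty A]
    [MeasurableSpace B] [TopologicalSpace B] [PolishSpace B] [BorelSpace B] [Nonempty B]
    {ρ : Measure (T × A)} {σ : Measure (T × B)} [IsFiniteMeasure ρ] [IsFiniteMeasure σ]
    (hρσ : ρ.fst = σ.fst) {c : A → B → ℝ≥0∞} (hc : LowerSemicontinuous (uncurry c)) :
    ∃ f : Measure (T × (A × B)), IsCouplingOver f ρ σ ∧
      ∫⁻ w, c w.2.1 w.2.2 ∂f = ∫⁻ t, Wc c (ρ.condKernel t) (σ.condKernel t) ∂ρ.fst := by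
  obtain ⟨K, _, hK⟩ := exists_measurable_isCoupling_lintegral_eq_Wc ρ.condKernel σ.condKernel hc
  refine ⟨ρ.fst ⊗ₘ K, isCouplingOver_compProd hρσ fun t ↦ (hK t).1, ?_⟩
  rw [Measure.lintegral_compProd (f := fun w : T × (A × B) ↦ c w.2.1 w.2.2)
    (hc.measurable.comp measurable_snd)]
  exact lintegral_congr fun t ↦ (hK t).2

end OptimalConditionalPlans

section Flows

/-- The flow induced by a transport plan: its images on `X × Y₁` and on `X₂ × Y`. -/
def inducedFlow (π : Measure ((X₁ × X₂) × (Y₁ × Y₂))) :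
    Measure ((X₁ × X₂) × Y₁) × Measure (X₂ × (Y₁ × Y₂)) :=
  (π.map fun w ↦ (w.1, w.2.1), π.map fun w ↦ (w.1.2, w.2))

variable {μ : Measure (X₁ × X₂)} {ν : Measure (Y₁ × Y₂)}
  {c₁ : X₁ → Y₁ → ℝ≥0∞} {c₂ : X₂ → Y₂ → ℝ≥0∞}

lemma CT_inducedFlow (hc₁ : Measurable (uncurry c₁)) (hc₂ : Measurable (uncurry c₂))
    (π : Measure ((X₁ × X₂) × (Y₁ × Y₂))) :
    CT c₁ c₂ (inducedFlow π) = ∫⁻ w, c₁ w.1.1 w.2.1 + c₂ w.1.2 w.2.2 ∂π := by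
  rw [CT, inducedFlow, lintegral_map (by fun_prop) (by fun_prop),
    lintegral_map (by fun_prop) (by fun_prop), lintegral_add_left (by fun_prop)]

lemma isCardinalFlow_inducedFlow_iff {π : Measure ((X₁ × X₂) × (Y₁ × Y₂))} :
    IsCardinalFlow μ ν (inducedFlow π).1 (inducedFlow π).2 ↔ IsCoupling π μ ν := by
  have hglue : (inducedFlow π).1.map (fun p ↦ (p.2, p.1.2))
      = (inducedFlow π).2.map fun p ↦ (p.2.1, p.1) := by
    rw [inducedFlow, Measure.map_map (by fun_prop) (by fun_prop),
      Measure.map_map (by fun_prop) (by fun_prop)]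
    rfl
  rw [IsCardinalFlow, and_iff_left hglue, inducedFlow, Measure.map_map (by fun_prop) (by fun_prop),
    Measure.map_map (by fun_prop) (by fun_prop)]
  rfl

lemma inducedFlow_mem_Flows_iff [IsProbabilityMeasure μ] {π : Measure ((X₁ × X₂) × (Y₁ × Y₂))} :
    inducedFlow π ∈ Flows μ ν ↔ IsCoupling π μ ν := by
  refine ⟨fun h ↦ isCardinalFlow_inducedFlow_iff.1 h.2.2, fun h ↦ ?_⟩
  have := h.isProbabilityMeasure
  exact ⟨Measure.isProbabilityMeasure_map (by fun_prop),
    Measure.isProbabilityMeasure_map (by fun_prop), isCardinalFlow_inducedFlow_iff.2 h⟩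

theorem exists_inducedFlow_eq [StandardBorelSpace X₁] [Nonempty X₁] [StandardBorelSpace Y₂]
    [Nonempty Y₂] {F : Measure ((X₁ × X₂) × Y₁) × Measure (X₂ × (Y₁ × Y₂))}
    [IsFiniteMeasure F.1] [IsFiniteMeasure F.2]
    (hglue : F.1.map (fun p ↦ (p.2, p.1.2)) = F.2.map fun q ↦ (q.2.1, q.1)) :
    ∃ π, inducedFlow π = F := by
  let ρ := F.1.map fun p ↦ ((p.2, p.1.2), p.1.1)
  let σ := F.2.map fun q ↦ ((q.2.1, q.1), q.2.2)
  have hρ : ρ.map (fun r ↦ ((r.2, r.1.2), r.1.1)) = F.1 := by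
    rw [Measure.map_map (by fun_prop) (by fun_prop)]
    exact Measure.map_id
  have hσ : σ.map (fun r ↦ (r.1.2, (r.1.1, r.2))) = F.2 := by
    rw [Measure.map_map (by fun_prop) (by fun_prop)]
    exact Measure.map_id
  have hρσ : ρ.fst = σ.fst := by
    rw [Measure.fst, Measure.fst, Measure.map_map (by fun_prop) (by fun_prop),
      Measure.map_map (by fun_prop) (by fun_prop)]
    exact hglue
  obtain ⟨g, hgρ, hgσ⟩ := exists_isCouplingOver hρσ
  refine ⟨g.map fun w ↦ ((w.2.1, w.1.2), (w.1.1, w.2.2)), Prod.ext ?_ ?_⟩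
  · change (g.map _).map _ = F.1
    rw [← hρ, ← hgρ, Measure.map_map (by fun_prop) (by fun_prop),
      Measure.map_map (by fun_prop) (by fun_prop)]
    rfl
  · change (g.map _).map _ = F.2
    rw [← hσ, ← hgσ, Measure.map_map (by fun_prop) (by fun_prop),
      Measure.map_map (by fun_prop) (by fun_prop)]
    rfl

theorem Wc_add_eq_iInf_CT [StandardBorelSpace X₁] [Nonempty X₁] [StandardBorelSpace Y₂]
    [Nonempty Y₂] [IsProbabilityMeasure μ]
    (hc₁ : Measurable (uncurry c₁)) (hc₂ : Measurable (uncurry c₂)) :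
    Wc (fun x y ↦ c₁ x.1 y.1 + c₂ x.2 y.2) μ ν = ⨅ F ∈ Flows μ ν, CT c₁ c₂ F := by
  refine le_antisymm (le_iInf₂ fun F hF ↦ ?_) (le_iInf₂ fun π hπ ↦ ?_)
  · have ⟨_, _, hflow⟩ := hF
    obtain ⟨π, rfl⟩ := exists_inducedFlow_eq hflow.2.2
    have hπ : IsCoupling π μ ν := inducedFlow_mem_Flows_iff.1 hF
    rw [CT_inducedFlow hc₁ hc₂]
    exact iInf₂_le π hπ
  · rw [← CT_inducedFlow hc₁ hc₂]
    exact iInf₂_le (inducedFlow π) (inducedFlow_mem_Flows_iff.2 hπ)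

end Flows

section Pivoting

/-- The pivoting functional `Z` of an intermedium measure `ζ` for measures on arbitrary standard
Borel products; `Zfun` is the case of `ℝ × ℝ`. -/
def pivotingFunctional [StandardBorelSpace X₁] [Nonempty X₁] [StandardBorelSpace X₂] [Nonempty X₂]
    [StandardBorelSpace Y₁] [Nonempty Y₁] [StandardBorelSpace Y₂] [Nonempty Y₂]
    (μ : Measure (X₁ × X₂)) (ν : Measure (Y₁ × Y₂)) (ζ : Measure (Y₁ × X₂))
    [IsFiniteMeasure μ] [IsFiniteMeasure ν] [IsFiniteMeasure ζ]
    (c₁ : X₁ → Y₁ → ℝ≥0∞) (c₂ : X₂ → Y₂ → ℝ≥0∞) : ℝ≥0∞ :=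
  ∫⁻ x₂, Wc c₁ ((μ.map Prod.swap).condKernel x₂) ((ζ.map Prod.swap).condKernel x₂)
      ∂(μ.map Prod.snd)
    + ∫⁻ y₁, Wc c₂ (ζ.condKernel y₁) (ν.condKernel y₁) ∂(ν.map Prod.fst)

variable {μ : Measure (X₁ × X₂)} {ν : Measure (Y₁ × Y₂)} {ζ : Measure (Y₁ × X₂)}
  {c₁ : X₁ → Y₁ → ℝ≥0∞} {c₂ : X₂ → Y₂ → ℝ≥0∞}

lemma isCouplingOver_fst_flow (f₁ : Measure ((X₁ × X₂) × Y₁)) :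
    IsCouplingOver (f₁.map fun p ↦ (p.1.2, (p.1.1, p.2))) ((f₁.map Prod.fst).map Prod.swap)
      ((f₁.map fun p ↦ (p.2, p.1.2)).map Prod.swap) := by
  constructor <;>
  · rw [Measure.map_map (by fun_prop) (by fun_prop), Measure.map_map (by fun_prop) (by fun_prop)]
    rfl

lemma isCouplingOver_snd_flow (f₂ : Measure (X₂ × (Y₁ × Y₂))) :
    IsCouplingOver (f₂.map fun q ↦ (q.2.1, (q.1, q.2.2))) (f₂.map fun q ↦ (q.2.1, q.1))
      (f₂.map Prod.snd) := by
  constructor <;>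
  · rw [Measure.map_map (by fun_prop) (by fun_prop)]
    rfl

lemma IsCouplingOver.marginals_fst_flow {g : Measure (X₂ × (X₁ × Y₁))}
    (h : IsCouplingOver g (μ.map Prod.swap) (ζ.map Prod.swap)) :
    (g.map fun w ↦ ((w.2.1, w.1), w.2.2)).map Prod.fst = μ ∧
      (g.map fun w ↦ ((w.2.1, w.1), w.2.2)).map (fun p ↦ (p.2, p.1.2)) = ζ := by
  have hμ := congrArg (Measure.map Prod.swap) h.1
  have hζ := congrArg (Measure.map Prod.swap) h.2
  rw [Measure.map_map (by fun_prop) (by fun_prop), Measure.map_map (by fun_prop) (by fun_prop),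
    Prod.swap_swap_eq, Measure.map_id] at hμ hζ
  rw [Measure.map_map (by fun_prop) (by fun_prop), Measure.map_map (by fun_prop) (by fun_prop)]
  exact ⟨hμ, hζ⟩

lemma IsCouplingOver.marginals_snd_flow {g : Measure (Y₁ × (X₂ × Y₂))} (h : IsCouplingOver g ζ ν) :
    (g.map fun w ↦ (w.2.1, (w.1, w.2.2))).map (fun q ↦ (q.2.1, q.1)) = ζ ∧
      (g.map fun w ↦ (w.2.1, (w.1, w.2.2))).map Prod.snd = ν := by
  rw [Measure.map_map (by fun_prop) (by fun_prop), Measure.map_map (by fun_prop) (by fun_prop)]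
  exact h

theorem pivotingFunctional_le_CT
    [StandardBorelSpace X₁] [Nonempty X₁] [StandardBorelSpace X₂] [Nonempty X₂]
    [StandardBorelSpace Y₁] [Nonempty Y₁] [StandardBorelSpace Y₂] [Nonempty Y₂]
    [IsFiniteMeasure μ] [IsFiniteMeasure ν] [IsFiniteMeasure ζ]
    (hc₁ : Measurable (uncurry c₁)) (hc₂ : Measurable (uncurry c₂))
    {F : Measure ((X₁ × X₂) × Y₁) × Measure (X₂ × (Y₁ × Y₂))} (hF : F ∈ Flows μ ν)
    (hζ : F.1.map (fun p ↦ (p.2, p.1.2)) = ζ) :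
    pivotingFunctional μ ν ζ c₁ c₂ ≤ CT c₁ c₂ F := by
  obtain ⟨_, _, hμ, hν, hglue⟩ := hF
  have h₁ := isCouplingOver_fst_flow F.1
  have h₂ := isCouplingOver_snd_flow F.2
  rw [hμ, hζ] at h₁
  rw [hν, ← hglue, hζ] at h₂
  refine add_le_add ?_ ?_
  · have h := h₁.lintegral_Wc_condKernel_le hc₁
    rwa [lintegral_map (by fun_prop) (by fun_prop), Measure.fst_map_swap] at h
  · have h := h₂.lintegral_Wc_condKernel_le hc₂
    rwa [lintegral_map (by fun_prop) (by fun_prop), h₂.fst_left, ← h₂.fst_right] at h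

variable [TopologicalSpace X₁] [PolishSpace X₁] [BorelSpace X₁] [Nonempty X₁]
  [TopologicalSpace X₂] [PolishSpace X₂] [BorelSpace X₂] [Nonempty X₂]
  [TopologicalSpace Y₁] [PolishSpace Y₁] [BorelSpace Y₁] [Nonempty Y₁]
  [TopologicalSpace Y₂] [PolishSpace Y₂] [BorelSpace Y₂] [Nonempty Y₂]

theorem exists_mem_Flows_CT_eq_pivotingFunctional [IsProbabilityMeasure μ] [IsProbabilityMeasure ν]
    [IsFiniteMeasure ζ] (hc₁ : LowerSemicontinuous (uncurry c₁))
    (hc₂ : LowerSemicontinuous (uncurry c₂))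
    (hsnd : ζ.map Prod.snd = μ.map Prod.snd) (hfst : ζ.map Prod.fst = ν.map Prod.fst) :
    ∃ F ∈ Flows μ ν, CT c₁ c₂ F = pivotingFunctional μ ν ζ c₁ c₂ := by
  have hswap : (μ.map Prod.swap).fst = (ζ.map Prod.swap).fst := by
    rw [Measure.fst_map_swap, Measure.fst_map_swap]
    exact hsnd.symm
  obtain ⟨g₁, h₁, hg₁⟩ := exists_isCouplingOver_lintegral_eq hswap hc₁
  obtain ⟨g₂, h₂, hg₂⟩ := exists_isCouplingOver_lintegral_eq hfst hc₂
  let f₁ := g₁.map fun w ↦ ((w.2.1, w.1), w.2.2)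
  let f₂ := g₂.map fun w ↦ (w.2.1, (w.1, w.2.2))
  obtain ⟨hμ, hζ₁⟩ : f₁.map Prod.fst = μ ∧ f₁.map (fun p ↦ (p.2, p.1.2)) = ζ :=
    h₁.marginals_fst_flow
  obtain ⟨hζ₂, hν⟩ : f₂.map (fun q ↦ (q.2.1, q.1)) = ζ ∧ f₂.map Prod.snd = ν :=
    h₂.marginals_snd_flow
  have hf₁ : IsProbabilityMeasure (f₁.map Prod.fst) := by rwa [hμ]
  have hf₂ : IsProbabilityMeasure (f₂.map Prod.snd) := by rwa [hν]
  refine ⟨(f₁, f₂), ⟨Measure.isProbabilityMeasure_of_map Prod.fst,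
    Measure.isProbabilityMeasure_of_map Prod.snd, hμ, hν, hζ₁.trans hζ₂.symm⟩, ?_⟩
  have hc₁' := hc₁.measurable
  have hc₂' := hc₂.measurable
  rw [CT, pivotingFunctional, lintegral_map (by fun_prop) (by fun_prop),
    lintegral_map (by fun_prop) (by fun_prop), hg₁, hg₂, Measure.fst_map_swap, Measure.fst, hfst]
  rfl

end Pivoting

theorem stmt9_general
    [TopologicalSpace X₁] [PolishSpace X₁] [BorelSpace X₁] [Nonempty X₁]
    [TopologicalSpace X₂] [PolishSpace X₂] [BorelSpace X₂] [Nonempty X₂]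
    [TopologicalSpace Y₁] [PolishSpace Y₁] [BorelSpace Y₁] [Nonempty Y₁]
    [TopologicalSpace Y₂] [PolishSpace Y₂] [BorelSpace Y₂] [Nonempty Y₂]
    (μ : Measure (X₁ × X₂)) (ν : Measure (Y₁ × Y₂))
    [IsProbabilityMeasure μ] [IsProbabilityMeasure ν]
    (c₁ : X₁ → Y₁ → ℝ≥0∞) (c₂ : X₂ → Y₂ → ℝ≥0∞)
    (hc₁ : LowerSemicontinuous (uncurry c₁)) (hc₂ : LowerSemicontinuous (uncurry c₂)) :
    Wc (fun x y ↦ c₁ x.1 y.1 + c₂ x.2 y.2) μ ν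
      = ⨅ ζ : {ζ : Measure (Y₁ × X₂) // IsProbabilityMeasure ζ ∧
          ζ.map Prod.snd = μ.map Prod.snd ∧ ζ.map Prod.fst = ν.map Prod.fst},
          letI := ζ.2.1
          pivotingFunctional μ ν ζ.1 c₁ c₂ := by
  rw [Wc_add_eq_iInf_CT hc₁.measurable hc₂.measurable]
  refine le_antisymm (le_iInf fun ⟨ζ, _, hsnd, hfst⟩ ↦ ?_) (le_iInf₂ fun F hF ↦ ?_)
  · obtain ⟨F, hF, h⟩ := exists_mem_Flows_CT_eq_pivotingFunctional hc₁ hc₂ hsnd hfst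
    exact h ▸ iInf₂_le F hF
  · have ⟨_, _, hflow⟩ := hF
    refine iInf_le_of_le ⟨F.1.map fun p ↦ (p.2, p.1.2), ?_, ?_, ?_⟩
      (pivotingFunctional_le_CT hc₁.measurable hc₂.measurable hF rfl)
    · exact Measure.isProbabilityMeasure_map (by fun_prop)
    · rw [← hflow.1, Measure.map_map (by fun_prop) (by fun_prop),
        Measure.map_map (by fun_prop) (by fun_prop)]
      rfl
    · rw [hflow.2.2, ← hflow.2.1, Measure.map_map (by fun_prop) (by fun_prop),
        Measure.map_map (by fun_prop) (by fun_prop)]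
      rfl

theorem stmt9 (μ ν : Measure (ℝ × ℝ)) [IsProbabilityMeasure μ] [IsProbabilityMeasure ν]
    (c₁ c₂ : ℝ → ℝ → ℝ≥0∞)
    (hc₁ : Continuous fun p : ℝ × ℝ => c₁ p.1 p.2)
    (hc₂ : Continuous fun p : ℝ × ℝ => c₂ p.1 p.2) :
    Wc (fun x y : ℝ × ℝ => c₁ x.1 y.1 + c₂ x.2 y.2) μ ν
      = ⨅ ζ : {ζ : Measure (ℝ × ℝ) // IsProbabilityMeasure ζ ∧
          ζ.map Prod.snd = μ.map Prod.snd ∧ ζ.map Prod.fst = ν.map Prod.fst},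
          letI := ζ.2.1
          Zfun μ ν ζ.1 c₁ c₂ := by
  exact stmt9_general μ ν c₁ c₂ hc₁.lowerSemicontinuous hc₂.lowerSemicontinuous
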